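/- Let n ≥ 2 and let φ be a Young function. If Ψ : L^φ(ℝⁿ, |x|dx) → ℝⁿ is a continuous and SL(n) covariant valuation (with Ψ(h₁) = Ψ(h₂) whenever h₁ = h₂ almost everywhere), then there exists a continuous function ξ : ℝ → ℝ with ξ(0) = 0 such that Ψ(α χ_Q) = ξ(α) m(Q) for every α ∈ ℝ and every compact convex polytope Q ∈ 𝒫ⁿ, where m(Q) = ∫_Q x dx. -/

import Mathlib

open MeasureTheory Filter Set Topology TopologicalSpace
open scoped ENNReal

noncomputable section

/-- `ℝⁿ` with the Euclidean norm. -/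
abbrev En (n : ℕ) := EuclideanSpace ℝ (Fin n)

/-- `φ : ℝ → ℝ` is a Young function (viewed as a function on `[0,∞)`):
`φ t = ∫₀ᵗ ψ(s) ds` for a non-decreasing, right-continuous `ψ` with `ψ 0 = 0`,
`ψ s > 0` for `s > 0` and `ψ s → ∞` as `s → ∞`. -/
def IsYoung (φ : ℝ → ℝ) : Prop :=
  ∃ ψ : ℝ → ℝ, (∀ s : ℝ, 0 ≤ s → 0 ≤ ψ s) ∧ MonotoneOn ψ (Set.Ici 0) ∧
    (∀ s : ℝ, 0 ≤ s → ContinuousWithinAt ψ (Set.Ici s) s) ∧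
    ψ 0 = 0 ∧ (∀ s : ℝ, 0 < s → 0 < ψ s) ∧
    Tendsto ψ atTop atTop ∧
    (∀ t : ℝ, 0 ≤ t → φ t = ∫ s in (0:ℝ)..t, ψ s)

/-- The complementary Young function `φ*(t) = sup_{s ≥ 0} (s t − φ s)`. -/
def conjYoung (φ : ℝ → ℝ) (t : ℝ) : ℝ :=
  sSup {y : ℝ | ∃ s : ℝ, 0 ≤ s ∧ y = s * t - φ s}

/-- The measure `μₙ(M) = ∫_M |x| dx`. -/
def mun {n : ℕ} (M : Set (En n)) : ℝ≥0∞ :=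
  ∫⁻ x in M, ENNReal.ofReal ‖x‖

/-- Membership in the Orlicz space `L^φ(ℝⁿ, |x|dx)`:
`h` is measurable and `∫ φ(δ|h(x)|)|x| dx < ∞` for every `δ > 0`. -/
def MemOrlicz {n : ℕ} (φ : ℝ → ℝ) (h : En n → ℝ) : Prop :=
  Measurable h ∧ ∀ δ : ℝ, 0 < δ →
    ∫⁻ x : En n, ENNReal.ofReal (φ (δ * |h x|)) * ENNReal.ofReal ‖x‖ < ⊤

/-- The Orlicz norm
`‖h‖_φ = sup { ∫ |h g| |x| dx : g measurable, ∫ φ*(|g|)|x| dx ≤ 1 }` (valued in `[0,∞]`). -/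
def orliczNorm {n : ℕ} (φ : ℝ → ℝ) (h : En n → ℝ) : ℝ≥0∞ :=
  ⨆ g ∈ {g : En n → ℝ | Measurable g ∧
      ∫⁻ x : En n, ENNReal.ofReal (conjYoung φ |g x|) * ENNReal.ofReal ‖x‖ ≤ 1},
    ∫⁻ x : En n, ENNReal.ofReal |h x * g x| * ENNReal.ofReal ‖x‖

/-- The moment vector `m(Q) = ∫_Q x dx` of a set `Q ⊆ ℝⁿ`. -/
def momentSet {n : ℕ} (Q : Set (En n)) : En n := ∫ x in Q, x

/-- The action of an `n × n` matrix on `ℝⁿ`. -/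
def matVec {n : ℕ} (ϑ : Matrix (Fin n) (Fin n) ℝ) (x : En n) : En n :=
  Matrix.toEuclideanLin ϑ x

/-- A compact convex polytope: the convex hull of a nonempty finite set. -/
def IsPolytope {n : ℕ} (Q : Set (En n)) : Prop :=
  ∃ S : Finset (En n), S.Nonempty ∧ Q = convexHull ℝ (S : Set (En n))

/-- The space of polytopes, topologized via the Hausdorff metric on nonempty
compact subsets of `ℝⁿ`. -/
abbrev PolySp (n : ℕ) := {K : NonemptyCompacts (En n) // IsPolytope (K : Set (En n))}

/-- `Y` is a valuation on polytopes. -/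
def IsPolyValuation {n : ℕ} (Y : Set (En n) → En n) : Prop :=
  ∀ Q₁ Q₂ : Set (En n), IsPolytope Q₁ → IsPolytope Q₂ → IsPolytope (Q₁ ∪ Q₂) →
    IsPolytope (Q₁ ∩ Q₂) → Y Q₁ + Y Q₂ = Y (Q₁ ∪ Q₂) + Y (Q₁ ∩ Q₂)

/-- `Y` is `SL(n)` covariant on polytopes: `Y(ϑ Q) = ϑ (Y Q)` for `det ϑ = 1`. -/
def IsPolySLCovariant {n : ℕ} (Y : Set (En n) → En n) : Prop :=
  ∀ Q : Set (En n), IsPolytope Q → ∀ ϑ : Matrix (Fin n) (Fin n) ℝ, ϑ.det = 1 →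
    Y (matVec ϑ '' Q) = matVec ϑ (Y Q)

/-- `Ψ` is a valuation on `L^φ(ℝⁿ, |x|dx)`. -/
def IsOrliczValuation {n : ℕ} (φ : ℝ → ℝ) (Ψ : (En n → ℝ) → En n) : Prop :=
  ∀ h₁ h₂ : En n → ℝ, MemOrlicz φ h₁ → MemOrlicz φ h₂ →
    Ψ (fun x => max (h₁ x) (h₂ x)) + Ψ (fun x => min (h₁ x) (h₂ x)) = Ψ h₁ + Ψ h₂

/-- `Ψ` is `SL(n)` covariant: `Ψ(h ∘ ϑ⁻¹) = ϑ (Ψ h)` for `det ϑ = 1`. -/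
def IsOrliczSLCovariant {n : ℕ} (φ : ℝ → ℝ) (Ψ : (En n → ℝ) → En n) : Prop :=
  ∀ h : En n → ℝ, MemOrlicz φ h → ∀ ϑ : Matrix (Fin n) (Fin n) ℝ, ϑ.det = 1 →
    Ψ (fun x => h (matVec ϑ⁻¹ x)) = matVec ϑ (Ψ h)

/-- `Ψ` is continuous: `Ψ(h_k) → Ψ(h)` whenever `‖h_k − h‖_φ → 0`. -/
def OrliczContinuous {n : ℕ} (φ : ℝ → ℝ) (Ψ : (En n → ℝ) → En n) : Prop :=
  ∀ (hk : ℕ → En n → ℝ) (h : En n → ℝ), (∀ k, MemOrlicz φ (hk k)) → MemOrlicz φ h →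
    Tendsto (fun k => orliczNorm φ (fun x => hk k x - h x)) atTop (𝓝 0) →
    Tendsto (fun k => Ψ (hk k)) atTop (𝓝 (Ψ h))

/-- `Ψ` identifies functions that agree almost everywhere. -/
def RespectsAE {n : ℕ} (φ : ℝ → ℝ) (Ψ : (En n → ℝ) → En n) : Prop :=
  ∀ h₁ h₂ : En n → ℝ, MemOrlicz φ h₁ → MemOrlicz φ h₂ →
    (∀ᵐ x : En n, h₁ x = h₂ x) → Ψ h₁ = Ψ h₂

/-- The `Δ₂` condition: `φ(2t) ≤ C φ(t)` for all `t ≥ T`. -/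
def SatisfiesDelta2 (φ : ℝ → ℝ) : Prop :=
  ∃ T C : ℝ, 0 ≤ T ∧ 0 < C ∧ ∀ t : ℝ, T ≤ t → φ (2 * t) ≤ C * φ t

/-- A closed cube in `ℝⁿ`: `{x : cᵢ ≤ xᵢ ≤ dᵢ}` with all side lengths equal. -/
def IsClosedCube {n : ℕ} (C : Set (En n)) : Prop :=
  ∃ c d : Fin n → ℝ, (∃ L : ℝ, 0 ≤ L ∧ ∀ i, d i - c i = L) ∧
    C = {x : En n | ∀ i, c i ≤ x i ∧ x i ≤ d i}

/-!
For a fixed height `α`, the set function `ν : A ↦ Ψ (α χ_A)` is finitely additive on bounded sets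
(valuation property), absolutely continuous with respect to Lebesgue measure (continuity in the
Orlicz norm) and `SL(n)` equivariant. By the Radon–Nikodym and Lebesgue differentiation theorems it
has a density at almost every point. Having density `v` at `x` is an `SL(n)` invariant relation
between `x` and `v`. Fix one point `x₀ ≠ 0` with a density `v₀`: as `v₀` is fixed by the stabilizer
of `x₀`, which contains the transvections along `x₀`, it is a multiple `c x₀`, and moving `x₀`
by transvections gives the density `c x` at every `x` off the line `ℝ x₀`. Hence `ν(A) = c m(A)`.
The factor `c = ξ(α)` is continuous in `α` because `Ψ (α χ_H)` is, for any `H` with `m(H) ≠ 0`.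
-/

section LinearAlgebra

variable {K V : Type*} [Field K] [AddCommGroup V] [Module K V] {x y v : V}

lemma exists_dual_eq_zero_eq_one (h : y ∉ Submodule.span K {x}) :
    ∃ f : Module.Dual K V, f x = 0 ∧ f y = 1 := by
  obtain ⟨f, hfy, hf⟩ := Submodule.exists_le_ker_of_notMem h
  have hfx : f x = 0 := hf (Submodule.mem_span_singleton_self x)
  exact ⟨(f y)⁻¹ • f, by simp [hfx], by simp [hfy]⟩

lemma exists_dual_eq_one_eq_one (hx : x ≠ 0) (h : y ∉ Submodule.span K {x}) :
    ∃ f : Module.Dual K V, f x = 1 ∧ f y = 1 := by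
  obtain ⟨g, -, hgx⟩ := exists_dual_eq_zero_eq_one (K := K) (x := 0) (y := x) (by simpa using hx)
  obtain ⟨f, hfx, hfy⟩ := exists_dual_eq_zero_eq_one h
  exact ⟨g + (1 - g y) • f, by simp [hgx, hfx], by simp [hfy]⟩

lemma mem_span_singleton_of_forall_det_eq_one (hx : x ≠ 0)
    (hv : ∀ T : V ≃ₗ[K] V, LinearEquiv.det T = 1 → T x = x → T v = v) :
    v ∈ Submodule.span K {x} := by
  by_contra h
  obtain ⟨f, hfx, hfv⟩ := exists_dual_eq_zero_eq_one h
  have hTv := hv (LinearEquiv.transvection hfx) (LinearEquiv.transvection.det_eq_one hfx)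
    (by simp [LinearMap.transvection.apply, hfx])
  exact hx (by simpa [LinearMap.transvection.apply, hfv] using hTv)

lemma exists_det_eq_one_apply_eq (hx : x ≠ 0) (h : y ∉ Submodule.span K {x}) :
    ∃ T : V ≃ₗ[K] V, LinearEquiv.det T = 1 ∧ T x = y := by
  obtain ⟨f, hfx, hfy⟩ := exists_dual_eq_one_eq_one hx h
  have hf : f (y - x) = 0 := by rw [map_sub, hfx, hfy, sub_self]
  exact ⟨LinearEquiv.transvection hf, LinearEquiv.transvection.det_eq_one hf,
    by simp [LinearMap.transvection.apply, hfx]⟩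

lemma span_singleton_ne_top (hV : 1 < Module.finrank K V) (x : V) : Submodule.span K {x} ≠ ⊤ := by
  intro h
  have := finrank_span_le_card (R := K) ({x} : Set V)
  rw [h, finrank_top, toFinset_singleton, Finset.card_singleton] at this
  exact hV.not_ge this

lemma eq_zero_of_forall_det_eq_one (hV : 1 < Module.finrank K V)
    (hv : ∀ T : V ≃ₗ[K] V, LinearEquiv.det T = 1 → T v = v) : v = 0 := by
  by_contra h0
  obtain ⟨y, hy⟩ : ∃ y, y ∉ Submodule.span K {v} :=
    SetLike.exists_not_mem_of_ne_top _ (span_singleton_ne_top hV v)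
  obtain ⟨T, hT, rfl⟩ := exists_det_eq_one_apply_eq h0 hy
  exact hy (by simpa only [hv T hT] using Submodule.mem_span_singleton_self v)

end LinearAlgebra

section Density

variable {E F : Type*} [MetricSpace E] [MeasurableSpace E] [NormedAddCommGroup F] [NormedSpace ℝ F]
  {μ : Measure E} {ν ν' : Set E → F} {x : E} {v w : F}

/-- The set function `ν` has density `v` with respect to `μ` at the point `x`. The estimate is
required for all measurable subsets of small balls around `x`, not only for the balls themselves:
this is what makes the notion invariant under linear changes of variables. -/
def HasDensityAt (μ : Measure E) (ν : Set E → F) (x : E) (v : F) : Prop :=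
  ∀ ε > 0, ∀ᶠ r in 𝓝[>] (0 : ℝ), ∀ A, MeasurableSet A → A ⊆ Metric.closedBall x r →
    ‖ν A - μ.real A • v‖ ≤ ε * μ.real (Metric.closedBall x r)

namespace HasDensityAt

lemma congr_of_mem_nhds {U : Set E} (hν : HasDensityAt μ ν x v) (hU : U ∈ 𝓝 x)
    (h : ∀ A, MeasurableSet A → A ⊆ U → ν A = ν' A) : HasDensityAt μ ν' x v := by
  intro ε hε
  obtain ⟨R, hR, hRU⟩ := Metric.nhds_basis_closedBall.mem_iff.1 hU
  filter_upwards [hν ε hε, Ioc_mem_nhdsGT hR] with r hr hrR A hA hAr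
  rw [← h A hA (hAr.trans ((Metric.closedBall_subset_closedBall hrR.2).trans hRU))]
  exact hr A hA hAr

lemma unique [OpensMeasurableSpace E] [μ.IsOpenPosMeasure] [IsFiniteMeasureOnCompacts μ]
    [ProperSpace E] (hv : HasDensityAt μ ν x v) (hw : HasDensityAt μ ν x w) : v = w := by
  refine eq_of_forall_dist_le fun ε hε => ?_
  obtain ⟨r, ⟨hrv, hrw⟩, hr⟩ := (((hv (ε / 2) (half_pos hε)).and (hw (ε / 2) (half_pos hε))).and
    self_mem_nhdsWithin).exists
  set B := Metric.closedBall x r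
  have hB : 0 < μ.real B := ENNReal.toReal_pos (Metric.measure_closedBall_pos μ x hr).ne'
    measure_closedBall_lt_top.ne
  have hvB := hrv B Metric.isClosed_closedBall.measurableSet subset_rfl
  have hwB := hrw B Metric.isClosed_closedBall.measurableSet subset_rfl
  refine le_of_mul_le_mul_left ?_ hB
  calc μ.real B * dist v w = ‖(ν B - μ.real B • w) - (ν B - μ.real B • v)‖ := by
        rw [sub_sub_sub_cancel_left, ← smul_sub, norm_smul, Real.norm_of_nonneg hB.le, dist_eq_norm]
    _ ≤ ε / 2 * μ.real B + ε / 2 * μ.real B := (norm_sub_le _ _).trans (add_le_add hwB hvB)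
    _ = μ.real B * ε := by ring

end HasDensityAt

lemma ae_hasDensityAt_setIntegral [SecondCountableTopology E] [BorelSpace E] [ProperSpace E]
    [IsLocallyFiniteMeasure μ] [IsUnifLocDoublingMeasure μ] [CompleteSpace F]
    {f : E → F} (hf : LocallyIntegrable f μ) :
    ∀ᵐ x ∂μ, HasDensityAt μ (fun A => ∫ y in A, f y ∂μ) x (f x) := by
  filter_upwards [IsUnifLocDoublingMeasure.ae_tendsto_average_norm_sub μ hf 1] with x hx ε hε
  have havg : Tendsto (fun r => ⨍ y in Metric.closedBall x r, ‖f y - f x‖ ∂μ) (𝓝[>] 0) (𝓝 0) :=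
    hx (fun _ => x) id tendsto_id <| by
      filter_upwards [self_mem_nhdsWithin] with r hr
      simpa using (mem_Ioi.1 hr).le
  filter_upwards [havg.eventually_le_const hε] with r hr A _ hAr
  have hfB : IntegrableOn f (Metric.closedBall x r) μ :=
    hf.integrableOn_isCompact (isCompact_closedBall x r)
  have hB : μ (Metric.closedBall x r) ≠ ⊤ := measure_closedBall_lt_top.ne
  calc ‖(∫ y in A, f y ∂μ) - μ.real A • f x‖ = ‖∫ y in A, (f y - f x) ∂μ‖ := by
        rw [integral_sub (hfB.mono_set hAr) (integrableOn_const (measure_ne_top_of_subset hAr hB)),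
          setIntegral_const]
    _ ≤ ∫ y in A, ‖f y - f x‖ ∂μ := norm_integral_le_integral_norm _
    _ ≤ ∫ y in Metric.closedBall x r, ‖f y - f x‖ ∂μ :=
      setIntegral_mono_set (hfB.sub (integrableOn_const hB)).norm
        (Eventually.of_forall fun _ => norm_nonneg _) hAr.eventuallyLE
    _ = (⨍ y in Metric.closedBall x r, ‖f y - f x‖ ∂μ) * μ.real (Metric.closedBall x r) := by
      rw [mul_comm, ← smul_eq_mul, measure_smul_setAverage _ hB]
    _ ≤ ε * μ.real (Metric.closedBall x r) := by gcongr

lemma ae_hasDensityAt_of_setIntegral_eq [SecondCountableTopology E] [BorelSpace E] [ProperSpace E]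
    [IsLocallyFiniteMeasure μ] [IsUnifLocDoublingMeasure μ] [CompleteSpace F]
    {f : E → F} (hf : LocallyIntegrable f μ) {U : Set E} (hU : IsOpen U)
    (hν : ∀ A, MeasurableSet A → A ⊆ U → ν A = ∫ y in A, f y ∂μ) :
    ∀ᵐ x ∂μ, x ∈ U → HasDensityAt μ ν x (f x) := by
  filter_upwards [ae_hasDensityAt_setIntegral hf] with x hx hxU
  exact hx.congr_of_mem_nhds (hU.mem_nhds hxU) fun A hA hAU => (hν A hA hAU).symm

end Density

lemma exists_preimage_closedBall_subset {𝕜 E F : Type*} [NontriviallyNormedField 𝕜]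
    [SeminormedAddCommGroup E] [SeminormedAddCommGroup F] [NormedSpace 𝕜 E] [NormedSpace 𝕜 F]
    (T : E ≃L[𝕜] F) :
    ∃ K > 0, ∀ x r, T ⁻¹' Metric.closedBall (T x) r ⊆ Metric.closedBall x (K * r) := by
  set K : NNReal := ‖(T.symm : F →L[𝕜] E)‖₊ + 1
  have hK : LipschitzWith K T.symm := T.symm.lipschitz.weaken le_self_add
  refine ⟨K, NNReal.coe_pos.2 (zero_lt_one.trans_le le_add_self), fun x r y hy => ?_⟩
  simpa only [ContinuousLinearEquiv.symm_apply_apply] using hK.mapsTo_closedBall (T x) r hy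

section DensityImage

variable {E F : Type*} [NormedAddCommGroup E] [NormedSpace ℝ E] [FiniteDimensional ℝ E]
  [MeasurableSpace E] [BorelSpace E] {μ : Measure E} [μ.IsAddHaarMeasure]
  [NormedAddCommGroup F] [NormedSpace ℝ F] {ν : Set E → F} {x : E} {v : F}

lemma HasDensityAt.image (hν : HasDensityAt μ ν x v) {T : E ≃L[ℝ] E} (hT : MeasurePreserving T μ μ)
    {L : F →L[ℝ] F}
    (hTν : ∀ A, MeasurableSet A → Bornology.IsBounded A → ν (T '' A) = L (ν A)) :
    HasDensityAt μ ν (T x) (L v) := by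
  intro ε hε
  obtain ⟨K, hK, hTK⟩ := exists_preimage_closedBall_subset T
  set δ := ε / ((‖L‖ + 1) * K ^ Module.finrank ℝ E)
  have hδ : 0 < δ := by positivity
  filter_upwards [eventually_nhdsGT_zero_mul_left hK (hν δ hδ), self_mem_nhdsWithin]
    with r hr hr0 A hA hAr
  rw [mem_Ioi] at hr0
  have hTAr : T ⁻¹' A ⊆ Metric.closedBall x (K * r) := (preimage_mono hAr).trans (hTK x r)
  have hTA : MeasurableSet (T ⁻¹' A) := hT.measurable hA
  have himage : T '' (T ⁻¹' A) = A := T.surjective.image_preimage A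
  have hνA : ν A = L (ν (T ⁻¹' A)) := by
    rw [← hTν _ hTA (Metric.isBounded_closedBall.subset hTAr), himage]
  calc ‖ν A - μ.real A • L v‖ = ‖L (ν (T ⁻¹' A) - μ.real (T ⁻¹' A) • v)‖ := by
        rw [hνA, hT.measureReal_preimage hA.nullMeasurableSet, map_sub, map_smul]
    _ ≤ (‖L‖ + 1) * (δ * μ.real (Metric.closedBall x (K * r))) := by
      refine (L.le_opNorm _).trans ?_
      gcongr
      · exact (lt_add_one _).le
      · exact hr _ hTA hTAr
    _ = ε * μ.real (Metric.closedBall (T x) r) := by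
      rw [Measure.addHaar_real_closedBall _ _ (by positivity),
        Measure.addHaar_real_closedBall _ _ hr0.le, mul_pow]
      simp only [δ]
      field_simp

end DensityImage

section Content

variable {X F : Type*} [MeasurableSpace X] [NormedAddCommGroup F] {μ : Measure X} {ν : Set X → F}

lemma tendsto_measure_iUnion_sdiff_biUnion_finset {ι : Type*} [Countable ι] {A : ι → Set X}
    (hA : ∀ i, MeasurableSet (A i)) (hfin : μ (⋃ i, A i) ≠ ⊤) :
    Tendsto (fun s : Finset ι => μ ((⋃ i, A i) \ ⋃ i ∈ s, A i)) atTop (𝓝 0) := by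
  have hanti : Antitone fun s : Finset ι => (⋃ i, A i) \ ⋃ i ∈ s, A i := fun s t hst =>
    sdiff_subset_sdiff_right (biUnion_subset_biUnion_left hst)
  have hinter : ⋂ s : Finset ι, (⋃ i, A i) \ ⋃ i ∈ s, A i = ∅ := by
    refine eq_empty_of_forall_notMem fun x hx => ?_
    obtain ⟨i, hi⟩ := mem_iUnion.1 (mem_iInter.1 hx ∅).1
    exact (mem_iInter.1 hx {i}).2 (by simpa using hi)
  have hmeas : ∀ s : Finset ι, MeasurableSet ((⋃ i, A i) \ ⋃ i ∈ s, A i) :=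
    fun s => (MeasurableSet.iUnion hA).diff (s.measurableSet_biUnion fun i _ => hA i)
  simpa only [Function.comp_def, hinter, measure_empty] using tendsto_measure_iInter_atTop (μ := μ)
    (fun s => (hmeas s).nullMeasurableSet) hanti ⟨∅, measure_ne_top_of_subset sdiff_subset hfin⟩

/-- `ν` is a finitely additive vector-valued set function that is absolutely continuous with
respect to `μ`. The values of `ν` at non-measurable sets are irrelevant. -/
structure IsAbsContContent (μ : Measure X) (ν : Set X → F) : Prop where
  union : ∀ {A B}, MeasurableSet A → MeasurableSet B → Disjoint A B → ν (A ∪ B) = ν A + ν B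
  tendsto_zero : ∀ {D : ℕ → Set X}, (∀ k, MeasurableSet (D k)) →
    Tendsto (fun k => μ (D k)) atTop (𝓝 0) → Tendsto (fun k => ν (D k)) atTop (𝓝 0)

namespace IsAbsContContent

lemma empty (hν : IsAbsContContent μ ν) : ν ∅ = 0 := by
  simpa using hν.union MeasurableSet.empty MeasurableSet.empty (disjoint_empty ∅)

lemma eq_zero_of_null (hν : IsAbsContContent μ ν) {A : Set X} (hA : MeasurableSet A)
    (h0 : μ A = 0) : ν A = 0 :=
  tendsto_nhds_unique tendsto_const_nhds
    (hν.tendsto_zero (fun _ => hA) (by simpa only [h0] using tendsto_const_nhds))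

lemma biUnion_finset (hν : IsAbsContContent μ ν) {ι : Type*} {A : ι → Set X}
    (hA : ∀ i, MeasurableSet (A i)) (hd : Pairwise (Function.onFun Disjoint A)) (s : Finset ι) :
    ν (⋃ i ∈ s, A i) = ∑ i ∈ s, ν (A i) := by
  classical
  induction s using Finset.induction_on with
  | empty => simpa using hν.empty
  | insert a s ha ih =>
    have hdisj : Disjoint (A a) (⋃ i ∈ s, A i) :=
      disjoint_iUnion₂_right.2 fun i hi => hd (ne_of_mem_of_not_mem hi ha).symm
    rw [Finset.set_biUnion_insert, hν.union (hA a) (s.measurableSet_biUnion fun i _ => hA i) hdisj,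
      ih, Finset.sum_insert ha]

lemma hasSum_iUnion [IsFiniteMeasure μ] (hν : IsAbsContContent μ ν) {A : ℕ → Set X}
    (hA : ∀ i, MeasurableSet (A i)) (hd : Pairwise (Function.onFun Disjoint A)) :
    HasSum (fun i => ν (A i)) (ν (⋃ i, A i)) := by
  set tail : Finset ℕ → Set X := fun s => (⋃ i, A i) \ ⋃ i ∈ s, A i
  have hs : ∀ s : Finset ℕ, MeasurableSet (⋃ i ∈ s, A i) :=
    fun s => s.measurableSet_biUnion fun i _ => hA i
  have htail : ∀ s, MeasurableSet (tail s) := fun s => (MeasurableSet.iUnion hA).diff (hs s)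
  have hsum : ∀ s : Finset ℕ, ∑ i ∈ s, ν (A i) = ν (⋃ i, A i) - ν (tail s) := by
    intro s
    rw [← hν.biUnion_finset hA hd, eq_sub_iff_add_eq,
      ← hν.union (hs s) (htail s) disjoint_sdiff_right,
      union_sdiff_cancel (iUnion₂_subset_iUnion _ _)]
  have hμtail : Tendsto (fun s => μ (tail s)) atTop (𝓝 0) :=
    tendsto_measure_iUnion_sdiff_biUnion_finset hA (measure_ne_top μ _)
  have hνtail : Tendsto (fun s => ν (tail s)) atTop (𝓝 0) :=
    tendsto_of_seq_tendsto fun u hu => hν.tendsto_zero (fun k => htail (u k)) (hμtail.comp hu)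
  simpa only [HasSum, SummationFilter.unconditional_filter, hsum, sub_zero]
    using hνtail.const_sub (ν (⋃ i, A i))

open Classical in
/-- The countably additive vector measure defined by `ν`, set to zero at non-measurable sets. -/
def toVectorMeasure [IsFiniteMeasure μ] (hν : IsAbsContContent μ ν) : VectorMeasure X F where
  measureOf' A := if MeasurableSet A then ν A else 0
  empty' := by rw [if_pos MeasurableSet.empty, hν.empty]
  not_measurable' _ hA := if_neg hA
  m_iUnion' A hA hd := by
    simpa only [hA, MeasurableSet.iUnion hA, if_true] using hν.hasSum_iUnion hA hd

lemma toVectorMeasure_apply [IsFiniteMeasure μ] (hν : IsAbsContContent μ ν) {A : Set X}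
    (hA : MeasurableSet A) : hν.toVectorMeasure A = ν A :=
  if_pos hA

lemma exists_integrable_setIntegral_eq [IsFiniteMeasure μ] [NormedSpace ℝ F]
    [FiniteDimensional ℝ F] (hν : IsAbsContContent μ ν) :
    ∃ f : X → F, Integrable f μ ∧ ∀ A, MeasurableSet A → ν A = ∫ x in A, f x ∂μ := by
  set b := Module.finBasis ℝ F
  set s : ∀ _, SignedMeasure X := fun i => hν.toVectorMeasure.mapRange (b.coord i).toAddMonoidHom
    (b.coord i).continuous_of_finiteDimensional
  have hs : ∀ i, ∀ {A}, MeasurableSet A → s i A = b.coord i (ν A) := fun i A hA => by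
    rw [← hν.toVectorMeasure_apply hA]; rfl
  have hac : ∀ i, s i ≪ᵥ μ.toENNRealVectorMeasure := fun i =>
    VectorMeasure.AbsolutelyContinuous.mk fun A hA h0 => by
      rw [Measure.toENNRealVectorMeasure_apply_measurable hA] at h0
      rw [hs i hA, hν.eq_zero_of_null hA h0, map_zero]
  have hint : ∀ i, Integrable (fun x => (s i).rnDeriv μ x • b i) μ :=
    fun i => (SignedMeasure.integrable_rnDeriv _ _).smul_const _
  refine ⟨fun x => ∑ i, (s i).rnDeriv μ x • b i, integrable_finsetSum _ fun i _ => hint i,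
    fun A hA => ?_⟩
  calc ν A = ∑ i, s i A • b i := by simp only [hs _ hA, b.coord_apply, b.sum_repr]
    _ = ∑ i, ∫ x in A, (s i).rnDeriv μ x • b i ∂μ := by
      refine Finset.sum_congr rfl fun i _ => ?_
      conv_lhs => rw [← SignedMeasure.withDensityᵥ_rnDeriv_eq _ _ (hac i)]
      rw [withDensityᵥ_apply (SignedMeasure.integrable_rnDeriv _ _) hA, integral_smul_const]
    _ = ∫ x in A, ∑ i, (s i).rnDeriv μ x • b i ∂μ :=
      (integral_finsetSum _ fun i _ => (hint i).integrableOn).symm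

end IsAbsContContent

end Content

section Equivariance

variable {E : Type*} [NormedAddCommGroup E] [NormedSpace ℝ E] [FiniteDimensional ℝ E]
  [MeasurableSpace E] [BorelSpace E] {μ : Measure E} [μ.IsAddHaarMeasure] {ν : Set E → E}

lemma measurePreserving_of_det_eq_one {T : E ≃ₗ[ℝ] E} (hT : LinearEquiv.det T = 1) :
    MeasurePreserving T μ μ := by
  have hmeas : Measurable T := T.toContinuousLinearEquiv.continuous.measurable
  have hdet : LinearMap.det (T.symm : E →ₗ[ℝ] E) = 1 := by
    rw [← LinearEquiv.coe_det, LinearEquiv.det_symm, map_inv, hT, inv_one, Units.val_one]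
  refine ⟨hmeas, Measure.ext fun A hA => ?_⟩
  rw [Measure.map_apply hmeas hA, Measure.addHaar_preimage_linearEquiv, hdet, abs_one,
    ENNReal.ofReal_one, one_mul]

/-- `ν` is a vector-valued set function on bounded measurable sets which is locally an absolutely
continuous content and commutes with linear maps of determinant one. -/
structure IsSLEquivariantContent (μ : Measure E) (ν : Set E → E) : Prop where
  inter_closedBall : ∀ R, IsAbsContContent (μ.restrict (Metric.closedBall 0 R))
    fun A => ν (A ∩ Metric.closedBall 0 R)
  image : ∀ T : E ≃ₗ[ℝ] E, LinearEquiv.det T = 1 → ∀ A, MeasurableSet A → Bornology.IsBounded A →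
    ν (T '' A) = T (ν A)

namespace IsSLEquivariantContent

lemma exists_integrable_setIntegral_eq (hν : IsSLEquivariantContent μ ν) (R : ℝ) :
    ∃ f : E → E, Integrable f μ ∧
      ∀ A, MeasurableSet A → A ⊆ Metric.closedBall 0 R → ν A = ∫ x in A, f x ∂μ := by
  have : IsFiniteMeasure (μ.restrict (Metric.closedBall 0 R)) :=
    ⟨by simpa using measure_closedBall_lt_top⟩
  obtain ⟨f, hf, hνf⟩ := (hν.inter_closedBall R).exists_integrable_setIntegral_eq
  have hball : MeasurableSet (Metric.closedBall (0 : E) R) :=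
    Metric.isClosed_closedBall.measurableSet
  refine ⟨(Metric.closedBall 0 R).indicator f, (integrable_indicator_iff hball).2 hf,
    fun A hA hAR => ?_⟩
  have hνA := hνf A hA
  rw [inter_eq_self_of_subset_left hAR, Measure.restrict_restrict_of_subset hAR] at hνA
  rw [hνA, setIntegral_indicator hball, inter_eq_self_of_subset_left hAR]

lemma hasDensityAt_map (hν : IsSLEquivariantContent μ ν) {x v : E} (hv : HasDensityAt μ ν x v)
    {T : E ≃ₗ[ℝ] E} (hT : LinearEquiv.det T = 1) : HasDensityAt μ ν (T x) (T v) :=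
  hv.image (T := T.toContinuousLinearEquiv) (L := T.toContinuousLinearEquiv)
    (measurePreserving_of_det_eq_one hT) (hν.image T hT)

lemma exists_ne_zero_hasDensityAt [Nontrivial E] (hν : IsSLEquivariantContent μ ν) :
    ∃ x ≠ 0, ∃ v, HasDensityAt μ ν x v := by
  obtain ⟨f, hf, hνf⟩ := hν.exists_integrable_setIntegral_eq 1
  have hdens := ae_hasDensityAt_of_setIntegral_eq hf.locallyIntegrable Metric.isOpen_ball
    fun A hA hA1 => hνf A hA (hA1.trans Metric.ball_subset_closedBall)
  have hball : ∃ᵐ x ∂μ, x ∈ Metric.ball (0 : E) 1 :=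
    frequently_ae_mem_iff.2 (Metric.measure_ball_pos μ 0 one_pos).ne'
  obtain ⟨x, hx, hxf, hx0⟩ := (hball.and_eventually (hdens.and (Measure.ae_ne μ 0))).exists
  exact ⟨x, hx0, f x, hxf hx⟩

lemma exists_ae_hasDensityAt_smul (hν : IsSLEquivariantContent μ ν)
    (hE : 1 < Module.finrank ℝ E) : ∃ c : ℝ, ∀ᵐ x ∂μ, HasDensityAt μ ν x (c • x) := by
  have : Nontrivial E := Module.nontrivial_of_finrank_pos (zero_lt_one.trans hE)
  obtain ⟨x₀, hx₀, v₀, hv₀⟩ := hν.exists_ne_zero_hasDensityAt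
  have hspan : v₀ ∈ Submodule.span ℝ {x₀} :=
    mem_span_singleton_of_forall_det_eq_one hx₀ fun T hT hTx₀ =>
      (hTx₀ ▸ hν.hasDensityAt_map hv₀ hT).unique hv₀
  obtain ⟨c, rfl⟩ := Submodule.mem_span_singleton.1 hspan
  have hnull : μ (Submodule.span ℝ {x₀} : Set E) = 0 :=
    Measure.addHaar_submodule μ _ (span_singleton_ne_top hE x₀)
  refine ⟨c, ?_⟩
  filter_upwards [measure_eq_zero_iff_ae_notMem.1 hnull] with x hx
  obtain ⟨T, hT, rfl⟩ := exists_det_eq_one_apply_eq hx₀ hx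
  simpa only [map_smul] using hν.hasDensityAt_map hv₀ hT

theorem exists_eq_smul_setIntegral_id (hν : IsSLEquivariantContent μ ν)
    (hE : 1 < Module.finrank ℝ E) :
    ∃ c : ℝ, ∀ A, MeasurableSet A → Bornology.IsBounded A → ν A = c • ∫ x in A, x ∂μ := by
  obtain ⟨c, hc⟩ := hν.exists_ae_hasDensityAt_smul hE
  refine ⟨c, fun A hA hAb => ?_⟩
  obtain ⟨R, hR⟩ := hAb.subset_ball 0
  obtain ⟨f, hf, hνf⟩ := hν.exists_integrable_setIntegral_eq R
  have hdens := ae_hasDensityAt_of_setIntegral_eq hf.locallyIntegrable Metric.isOpen_ball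
    fun A hA hAR => hνf A hA (hAR.trans Metric.ball_subset_closedBall)
  rw [hνf A hA (hR.trans Metric.ball_subset_closedBall), ← integral_smul]
  refine setIntegral_congr_ae hA ?_
  filter_upwards [hc, hdens] with x hcx hfx hxA
  exact (hfx (hR hxA)).unique hcx

end IsSLEquivariantContent

lemma exists_setIntegral_id_ne_zero [Nontrivial E] (μ : Measure E) [μ.IsAddHaarMeasure] :
    ∃ A : Set E, MeasurableSet A ∧ Bornology.IsBounded A ∧ ∫ x in A, x ∂μ ≠ 0 := by
  by_contra! h
  have hint : IntegrableOn id (Metric.ball (0 : E) 1) μ :=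
    (continuous_id.continuousOn.integrableOn_compact (isCompact_closedBall 0 1)).mono_set
      Metric.ball_subset_closedBall
  have hzero : id =ᵐ[μ.restrict (Metric.ball (0 : E) 1)] 0 :=
    hint.ae_eq_zero_of_forall_setIntegral_eq_zero fun A hA _ => by
      rw [Measure.restrict_restrict hA]
      exact h _ (hA.inter measurableSet_ball) (Metric.isBounded_ball.subset inter_subset_right)
  have hball : ∃ᵐ x ∂μ, x ∈ Metric.ball (0 : E) 1 :=
    frequently_ae_mem_iff.2 (Metric.measure_ball_pos μ 0 one_pos).ne'
  obtain ⟨x, hx, hx0, hx0'⟩ := (hball.and_eventually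
    (((ae_restrict_iff' measurableSet_ball).1 hzero).and (Measure.ae_ne μ 0))).exists
  exact hx0' (hx0 hx)

end Equivariance

section Orlicz

variable {φ : ℝ → ℝ}

namespace IsYoung

lemma map_zero (hφ : IsYoung φ) : φ 0 = 0 := by
  obtain ⟨ψ, -, -, -, -, -, -, hφψ⟩ := hφ
  rw [hφψ 0 le_rfl, intervalIntegral.integral_same]

lemma nonneg (hφ : IsYoung φ) {s : ℝ} (hs : 0 ≤ s) : 0 ≤ φ s := by
  obtain ⟨ψ, hψ, -, -, -, -, -, hφψ⟩ := hφ
  rw [hφψ s hs]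
  exact intervalIntegral.integral_nonneg hs fun u hu => hψ u hu.1

lemma exists_forall_mul_sub_le (hφ : IsYoung φ) {t : ℝ} (ht : 0 ≤ t) :
    ∃ S, ∀ s, 0 ≤ s → t * (s - S) ≤ φ s := by
  have hφ0 : ∀ s, 0 ≤ s → 0 ≤ φ s := fun s hs => hφ.nonneg hs
  obtain ⟨ψ, -, hmono, -, -, -, htop, hφψ⟩ := hφ
  obtain ⟨S, hS⟩ := ((htop.eventually_ge_atTop t).and
    (eventually_ge_atTop 0)).exists_forall_of_atTop
  have hS0 : 0 ≤ S := (hS S le_rfl).2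
  have hint : ∀ {a b : ℝ}, 0 ≤ a → 0 ≤ b → IntervalIntegrable ψ volume a b := fun ha hb =>
    (hmono.mono fun _ hx => (le_min ha hb).trans hx.1).intervalIntegrable
  refine ⟨S, fun s hs => ?_⟩
  rcases le_total s S with hsS | hSs
  · exact (mul_nonpos_of_nonneg_of_nonpos ht (sub_nonpos.2 hsS)).trans (hφ0 s hs)
  · calc t * (s - S) = ∫ _ in S..s, t := by
          rw [intervalIntegral.integral_const, smul_eq_mul, mul_comm]
      _ ≤ ∫ u in S..s, ψ u := intervalIntegral.integral_mono_on hSs intervalIntegrable_const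
          (hint hS0 hs) fun u hu => (hS u hu.1).1
      _ = φ s - φ S := by
          rw [hφψ s hs, hφψ S hS0, intervalIntegral.integral_interval_sub_left (hint le_rfl hs)
            (hint le_rfl hS0)]
      _ ≤ φ s := sub_le_self _ (hφ0 S hS0)

lemma mul_le_add_conjYoung (hφ : IsYoung φ) {s t : ℝ} (hs : 0 ≤ s) (ht : 0 ≤ t) :
    s * t ≤ φ s + conjYoung φ t := by
  have hbdd : BddAbove {y : ℝ | ∃ s : ℝ, 0 ≤ s ∧ y = s * t - φ s} := by
    obtain ⟨S, hS⟩ := hφ.exists_forall_mul_sub_le ht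
    refine ⟨S * t, ?_⟩
    rintro _ ⟨s, hs, rfl⟩
    linarith [hS s hs]
  exact sub_le_iff_le_add'.1 (le_csSup hbdd ⟨s, hs, rfl⟩)

lemma conjYoung_nonneg (hφ : IsYoung φ) {t : ℝ} (ht : 0 ≤ t) : 0 ≤ conjYoung φ t := by
  simpa [hφ.map_zero] using hφ.mul_le_add_conjYoung le_rfl ht

lemma mul_le_div_mul_add_conjYoung (hφ : IsYoung φ) {s t M : ℝ} (hs : 0 < s) (ht : 0 ≤ t)
    (hM : 0 ≤ M) : M * t ≤ M / s * (φ s + conjYoung φ t) :=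
  calc M * t = M / s * (s * t) := by field_simp
    _ ≤ M / s * (φ s + conjYoung φ t) := by
      gcongr
      exact hφ.mul_le_add_conjYoung hs.le ht

end IsYoung

variable {n : ℕ} {D : Set (En n)}

lemma mun_eq_withDensity (D : Set (En n)) :
    mun D = (volume.withDensity fun x : En n => ENNReal.ofReal ‖x‖) D :=
  (withDensity_apply' _ D).symm

lemma mun_le_mul_volume {R : ℝ} (hD : D ⊆ Metric.closedBall 0 R) :
    mun D ≤ ENNReal.ofReal R * volume D := by
  rw [mun, ← setLIntegral_const]
  exact setLIntegral_mono measurable_const fun x hx =>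
    ENNReal.ofReal_le_ofReal (mem_closedBall_zero_iff.1 (hD hx))

lemma mun_ne_top_of_isBounded (hD : Bornology.IsBounded D) : mun D ≠ ⊤ := by
  obtain ⟨R, hR⟩ := hD.subset_closedBall 0
  exact ne_top_of_le_ne_top (ENNReal.mul_ne_top ENNReal.ofReal_ne_top hD.measure_lt_top.ne)
    (mun_le_mul_volume hR)

lemma IsYoung.memOrlicz_indicator (hφ : IsYoung φ) (hD : MeasurableSet D) (hfin : mun D ≠ ⊤)
    (α : ℝ) : MemOrlicz φ (D.indicator fun _ => α) := by
  refine ⟨measurable_const.indicator hD, fun δ _ => ?_⟩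
  have hind : ∀ x : En n, ENNReal.ofReal (φ (δ * |D.indicator (fun _ => α) x|)) *
      ENNReal.ofReal ‖x‖ =
      D.indicator (fun x => ENNReal.ofReal (φ (δ * |α|)) * ENNReal.ofReal ‖x‖) x := by
    intro x
    by_cases hx : x ∈ D <;> simp [hx, hφ.map_zero]
  simp only [hind]
  rw [lintegral_indicator hD, lintegral_const_mul' _ _ ENNReal.ofReal_ne_top]
  exact ENNReal.mul_lt_top ENNReal.ofReal_lt_top hfin.lt_top

lemma IsYoung.orliczNorm_le (hφ : IsYoung φ) (hD : MeasurableSet D) {h : En n → ℝ} {M s : ℝ}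
    (hM : 0 ≤ M) (hs : 0 < s) (hh : ∀ x, |h x| ≤ D.indicator (fun _ => M) x) :
    orliczNorm φ h ≤ ENNReal.ofReal (M / s) * (ENNReal.ofReal (φ s) * mun D + 1) := by
  refine iSup₂_le fun g ⟨_, hg⟩ => ?_
  set φs : En n → ℝ≥0∞ := D.indicator fun x => ENNReal.ofReal (φ s) * ENNReal.ofReal ‖x‖
  have hφs : Measurable φs := Measurable.indicator (by fun_prop) hD
  have hpoint : ∀ x, ENNReal.ofReal |h x * g x| * ENNReal.ofReal ‖x‖ ≤ ENNReal.ofReal (M / s) *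
      (φs x + ENNReal.ofReal (conjYoung φ |g x|) * ENNReal.ofReal ‖x‖) := by
    intro x
    have hhx := hh x
    by_cases hx : x ∈ D
    · rw [indicator_of_mem hx] at hhx
      simp only [φs, indicator_of_mem hx]
      rw [← add_mul, ← mul_assoc, ← ENNReal.ofReal_add (hφ.nonneg hs.le)
        (hφ.conjYoung_nonneg (abs_nonneg _)), ← ENNReal.ofReal_mul (div_nonneg hM hs.le), abs_mul]
      gcongr ENNReal.ofReal ?_ * _
      exact (mul_le_mul_of_nonneg_right hhx (abs_nonneg _)).trans
        (hφ.mul_le_div_mul_add_conjYoung hs (abs_nonneg _) hM)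
    · rw [indicator_of_notMem hx] at hhx
      simp [abs_nonpos_iff.1 hhx]
  calc ∫⁻ x, ENNReal.ofReal |h x * g x| * ENNReal.ofReal ‖x‖
      ≤ ENNReal.ofReal (M / s) * ((∫⁻ x, φs x) +
          ∫⁻ x, ENNReal.ofReal (conjYoung φ |g x|) * ENNReal.ofReal ‖x‖) := by
        rw [← lintegral_add_left hφs, ← lintegral_const_mul' _ _ ENNReal.ofReal_ne_top]
        exact lintegral_mono hpoint
    _ ≤ ENNReal.ofReal (M / s) * (ENNReal.ofReal (φ s) * mun D + 1) := by
        rw [lintegral_indicator hD, lintegral_const_mul' _ _ ENNReal.ofReal_ne_top]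
        exact mul_le_mul_right (add_le_add_right hg _) _

variable {ι : Type*} {l : Filter ι}

lemma IsYoung.tendsto_orliczNorm_zero_of_tendsto_mun (hφ : IsYoung φ) {D : ι → Set (En n)}
    (hD : ∀ k, MeasurableSet (D k)) {h : ι → En n → ℝ} {M : ℝ} (hM : 0 ≤ M)
    (hh : ∀ k x, |h k x| ≤ (D k).indicator (fun _ => M) x)
    (h0 : Tendsto (fun k => mun (D k)) l (𝓝 0)) :
    Tendsto (fun k => orliczNorm φ (h k)) l (𝓝 0) := by
  refine ENNReal.tendsto_nhds_zero.2 fun ε hε => ?_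
  have hMs : Tendsto (fun s => ENNReal.ofReal (M / s) * (1 + 1)) atTop (𝓝 0) := by
    have := ENNReal.tendsto_ofReal (tendsto_const_nhds (x := M).div_atTop tendsto_id)
    simpa using ENNReal.Tendsto.mul_const (b := 1 + 1) this (Or.inr (by norm_num))
  obtain ⟨s, hsε, hs⟩ := ((ENNReal.tendsto_nhds_zero.1 hMs ε hε).and (eventually_gt_atTop 0)).exists
  have hφD : Tendsto (fun k => ENNReal.ofReal (φ s) * mun (D k)) l (𝓝 0) := by
    simpa using ENNReal.Tendsto.const_mul h0 (Or.inr (ENNReal.ofReal_ne_top (r := φ s)))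
  filter_upwards [ENNReal.tendsto_nhds_zero.1 hφD 1 one_pos] with k hk
  calc orliczNorm φ (h k) ≤ ENNReal.ofReal (M / s) * (ENNReal.ofReal (φ s) * mun (D k) + 1) :=
        hφ.orliczNorm_le (hD k) hM hs (hh k)
    _ ≤ ENNReal.ofReal (M / s) * (1 + 1) := by gcongr
    _ ≤ ε := hsε

lemma IsYoung.tendsto_orliczNorm_zero_of_tendsto_bound (hφ : IsYoung φ) (hD : MeasurableSet D)
    (hfin : mun D ≠ ⊤) {h : ι → En n → ℝ} {M : ι → ℝ} (hM : ∀ k, 0 ≤ M k)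
    (hh : ∀ k x, |h k x| ≤ D.indicator (fun _ => M k) x) (h0 : Tendsto M l (𝓝 0)) :
    Tendsto (fun k => orliczNorm φ (h k)) l (𝓝 0) := by
  have hC : ENNReal.ofReal (φ 1) * mun D + 1 ≠ ⊤ :=
    ENNReal.add_ne_top.2 ⟨ENNReal.mul_ne_top ENNReal.ofReal_ne_top hfin, ENNReal.one_ne_top⟩
  have hbound : Tendsto (fun k => ENNReal.ofReal (M k / 1) * (ENNReal.ofReal (φ 1) * mun D + 1)) l
      (𝓝 0) := by
    simpa using ENNReal.Tendsto.mul_const (ENNReal.tendsto_ofReal h0) (Or.inr hC)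
  exact tendsto_of_tendsto_of_tendsto_of_le_of_le tendsto_const_nhds hbound (fun _ => zero_le)
    fun k => hφ.orliczNorm_le hD (hM k) one_pos (hh k)

end Orlicz

section MaxMinIndicator

variable {X R : Type*} [LinearOrder R] [Zero R] {a : R} {A B : Set X}

lemma max_indicator_of_nonneg (ha : 0 ≤ a) :
    (fun x => max (A.indicator (fun _ => a) x) (B.indicator (fun _ => a) x)) =
      (A ∪ B).indicator fun _ => a := by
  funext x
  by_cases hA : x ∈ A <;> by_cases hB : x ∈ B <;> simp [hA, hB, ha]

lemma min_indicator_of_nonneg (ha : 0 ≤ a) :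
    (fun x => min (A.indicator (fun _ => a) x) (B.indicator (fun _ => a) x)) =
      (A ∩ B).indicator fun _ => a := by
  funext x
  by_cases hA : x ∈ A <;> by_cases hB : x ∈ B <;> simp [hA, hB, ha]

lemma max_indicator_of_nonpos (ha : a ≤ 0) :
    (fun x => max (A.indicator (fun _ => a) x) (B.indicator (fun _ => a) x)) =
      (A ∩ B).indicator fun _ => a :=
  min_indicator_of_nonneg (R := Rᵒᵈ) ha

lemma min_indicator_of_nonpos (ha : a ≤ 0) :
    (fun x => min (A.indicator (fun _ => a) x) (B.indicator (fun _ => a) x)) =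
      (A ∪ B).indicator fun _ => a :=
  max_indicator_of_nonneg (R := Rᵒᵈ) ha

end MaxMinIndicator

section Valuation

variable {n : ℕ} {φ : ℝ → ℝ} {Ψ : (En n → ℝ) → En n} {A B : Set (En n)} {α : ℝ}

/-- The set function `A ↦ Ψ(α χ_A)` induced by `Ψ` at the height `α`. -/
def indicatorContent (Ψ : (En n → ℝ) → En n) (α : ℝ) (A : Set (En n)) : En n :=
  Ψ (A.indicator fun _ => α)

lemma IsYoung.memOrlicz_zero (hφ : IsYoung φ) : MemOrlicz φ (0 : En n → ℝ) := by
  rw [← indicator_empty' fun _ => (0 : ℝ)]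
  exact hφ.memOrlicz_indicator MeasurableSet.empty (by simp [mun]) 0

lemma IsOrliczSLCovariant.comp_symm (hcov : IsOrliczSLCovariant φ Ψ) {h : En n → ℝ}
    (hh : MemOrlicz φ h) {T : En n ≃ₗ[ℝ] En n} (hT : LinearEquiv.det T = 1) :
    Ψ (h ∘ T.symm) = T (Ψ h) := by
  obtain ⟨M, hM⟩ := Matrix.toEuclideanLin.surjective (T : En n →ₗ[ℝ] En n)
  have hMT : ∀ x, matVec M x = T x := fun x => by rw [matVec, hM, LinearEquiv.coe_coe]
  have hdet : M.det = 1 := by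
    rw [← LinearMap.det_toLpLin 2 M, hM, ← LinearEquiv.coe_det, hT, Units.val_one]
  have hMinv : ∀ x, matVec M⁻¹ x = T.symm x := fun x => by
    rw [LinearEquiv.eq_symm_apply, ← hMT, matVec, matVec, ← LinearMap.comp_apply,
      ← Matrix.toLpLin_mul_same, Matrix.mul_nonsing_inv _ (by simp [hdet]), Matrix.toLpLin_one,
      LinearMap.id_apply]
  simpa only [Function.comp_def, hMinv, hMT] using hcov h hh M hdet

lemma IsOrliczSLCovariant.map_zero (hcov : IsOrliczSLCovariant φ Ψ) (hφ : IsYoung φ)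
    (hn : 2 ≤ n) : Ψ 0 = 0 :=
  eq_zero_of_forall_det_eq_one (K := ℝ) (by rwa [finrank_euclideanSpace_fin]) fun _ hT =>
    (hcov.comp_symm hφ.memOrlicz_zero hT).symm

lemma indicatorContent_empty : indicatorContent Ψ α ∅ = Ψ 0 := by
  rw [indicatorContent, indicator_empty]; rfl

lemma indicatorContent_zero : indicatorContent Ψ 0 A = Ψ 0 := by
  rw [indicatorContent, indicator_zero]; rfl

lemma IsOrliczSLCovariant.indicatorContent_image (hcov : IsOrliczSLCovariant φ Ψ) (hφ : IsYoung φ)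
    (hA : MeasurableSet A) (hfin : mun A ≠ ⊤) {T : En n ≃ₗ[ℝ] En n}
    (hT : LinearEquiv.det T = 1) :
    indicatorContent Ψ α (T '' A) = T (indicatorContent Ψ α A) := by
  rw [indicatorContent, indicatorContent, ← hcov.comp_symm (hφ.memOrlicz_indicator hA hfin α) hT,
    LinearEquiv.image_eq_preimage_symm]
  rfl

lemma IsOrliczValuation.indicatorContent_union_add_inter (hval : IsOrliczValuation φ Ψ)
    (hφ : IsYoung φ) (hA : MeasurableSet A) (hAfin : mun A ≠ ⊤) (hB : MeasurableSet B)
    (hBfin : mun B ≠ ⊤) :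
    indicatorContent Ψ α (A ∪ B) + indicatorContent Ψ α (A ∩ B) =
      indicatorContent Ψ α A + indicatorContent Ψ α B := by
  have hsum := hval _ _ (hφ.memOrlicz_indicator hA hAfin α) (hφ.memOrlicz_indicator hB hBfin α)
  rcases le_total 0 α with hα | hα
  · rwa [max_indicator_of_nonneg hα, min_indicator_of_nonneg hα] at hsum
  · rwa [max_indicator_of_nonpos hα, min_indicator_of_nonpos hα, add_comm] at hsum

lemma OrliczContinuous.tendsto_indicatorContent (hcont : OrliczContinuous φ Ψ) (hφ : IsYoung φ)
    {D : ℕ → Set (En n)} (hD : ∀ k, MeasurableSet (D k)) (hDfin : ∀ k, mun (D k) ≠ ⊤)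
    (hA : MeasurableSet A) (hAfin : mun A ≠ ⊤)
    (h0 : Tendsto (fun k => mun (symmDiff (D k) A)) atTop (𝓝 0)) :
    Tendsto (fun k => indicatorContent Ψ α (D k)) atTop (𝓝 (indicatorContent Ψ α A)) := by
  refine hcont _ _ (fun k => hφ.memOrlicz_indicator (hD k) (hDfin k) α)
    (hφ.memOrlicz_indicator hA hAfin α) ?_
  refine hφ.tendsto_orliczNorm_zero_of_tendsto_mun (fun k => (hD k).symmDiff hA) (abs_nonneg α)
    (fun k x => ?_) h0
  rw [← apply_indicator_symmDiff abs_neg]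
  by_cases hx : x ∈ symmDiff (D k) A <;> simp [hx]

lemma OrliczContinuous.continuous_indicatorContent (hcont : OrliczContinuous φ Ψ)
    (hφ : IsYoung φ) (hA : MeasurableSet A) (hfin : mun A ≠ ⊤) :
    Continuous fun α => indicatorContent Ψ α A := by
  refine SeqContinuous.continuous fun a α ha => ?_
  refine hcont _ _ (fun k => hφ.memOrlicz_indicator hA hfin (a k))
    (hφ.memOrlicz_indicator hA hfin α) ?_
  refine hφ.tendsto_orliczNorm_zero_of_tendsto_bound hA hfin (fun k => abs_nonneg (a k - α))
    (fun k x => ?_) (by simpa using (ha.sub_const α).abs)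
  by_cases hx : x ∈ A <;> simp [hx]

lemma isSLEquivariantContent_indicatorContent (hn : 2 ≤ n) (hφ : IsYoung φ)
    (hval : IsOrliczValuation φ Ψ) (hcov : IsOrliczSLCovariant φ Ψ)
    (hcont : OrliczContinuous φ Ψ) (α : ℝ) :
    IsSLEquivariantContent volume (indicatorContent Ψ α) where
  image T hT A hA hAb := hcov.indicatorContent_image hφ hA (mun_ne_top_of_isBounded hAb) hT
  inter_closedBall R := by
    set S : Set (En n) := Metric.closedBall 0 R
    have hS : MeasurableSet S := measurableSet_closedBall
    have hfin : ∀ A : Set (En n), mun (A ∩ S) ≠ ⊤ := fun A =>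
      mun_ne_top_of_isBounded (Metric.isBounded_closedBall.subset inter_subset_right)
    have hempty : indicatorContent Ψ α ∅ = 0 :=
      indicatorContent_empty.trans (hcov.map_zero hφ hn)
    refine ⟨fun {A B} hA hB hAB => ?_, fun {D} hD hD0 => ?_⟩
    · have hABS : A ∩ S ∩ (B ∩ S) = ∅ :=
        (hAB.mono inter_subset_left inter_subset_left).inter_eq
      rw [union_inter_distrib_right, ← hval.indicatorContent_union_add_inter hφ (hA.inter hS)
        (hfin A) (hB.inter hS) (hfin B), hABS, hempty, add_zero]
    · simp only [Measure.restrict_apply (hD _)] at hD0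
      have hmun : Tendsto (fun k => mun (D k ∩ S)) atTop (𝓝 0) := by
        refine tendsto_of_tendsto_of_tendsto_of_le_of_le tendsto_const_nhds ?_
          (fun _ => zero_le) fun k => mun_le_mul_volume inter_subset_right
        simpa using ENNReal.Tendsto.const_mul hD0 (Or.inr (ENNReal.ofReal_ne_top (r := R)))
      rw [← hempty]
      refine hcont.tendsto_indicatorContent hφ (fun k => (hD k).inter hS) (fun k => hfin (D k))
        MeasurableSet.empty (by simp [mun]) ?_
      simpa only [← bot_eq_empty, symmDiff_bot] using hmun

end Valuation

section Exhaustion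

variable {n : ℕ} {Q : Set (En n)}

lemma tendsto_mun_sdiff_closedBall (hQ : MeasurableSet Q) (hfin : mun Q ≠ ⊤) :
    Tendsto (fun k : ℕ => mun (Q \ Metric.closedBall 0 k)) atTop (𝓝 0) := by
  have hanti : Antitone fun k : ℕ => Q \ Metric.closedBall (0 : En n) k := fun k m hkm =>
    sdiff_subset_sdiff_right (Metric.closedBall_subset_closedBall (Nat.cast_le.2 hkm))
  have hinter : ⋂ k : ℕ, Q \ Metric.closedBall (0 : En n) k = ∅ := by
    rw [← sdiff_iUnion, Metric.iUnion_closedBall_nat, sdiff_univ]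
  simp only [mun_eq_withDensity] at hfin ⊢
  simpa only [Function.comp_def, hinter, measure_empty] using tendsto_measure_iInter_atTop
    (fun k => (hQ.diff measurableSet_closedBall).nullMeasurableSet) hanti
    ⟨0, measure_ne_top_of_subset sdiff_subset hfin⟩

lemma tendsto_momentSet_inter_closedBall (hQ : MeasurableSet Q) (hfin : mun Q ≠ ⊤) :
    Tendsto (fun k : ℕ => momentSet (Q ∩ Metric.closedBall 0 k)) atTop (𝓝 (momentSet Q)) := by
  have hUnion : ⋃ k : ℕ, Q ∩ Metric.closedBall (0 : En n) k = Q :=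
    Metric.iUnion_inter_closedBall_nat Q 0
  have hint : IntegrableOn (fun x : En n => x) Q := by
    refine ⟨aestronglyMeasurable_id, ?_⟩
    simpa only [HasFiniteIntegral, mun, ofReal_norm] using hfin.lt_top
  have := tendsto_setIntegral_of_monotone (μ := volume) (f := fun x : En n => x)
    (fun k : ℕ => hQ.inter (measurableSet_closedBall (x := 0) (ε := k)))
    (fun k m hkm => inter_subset_inter_right _
      (Metric.closedBall_subset_closedBall (Nat.cast_le.2 hkm))) (by rwa [hUnion])
  rwa [hUnion] at this

end Exhaustion

section Representation

variable {n : ℕ} {φ : ℝ → ℝ} {Ψ : (En n → ℝ) → En n} {Q : Set (En n)}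

lemma OrliczContinuous.indicatorContent_eq_smul_momentSet (hcont : OrliczContinuous φ Ψ)
    (hφ : IsYoung φ) {α c : ℝ}
    (hbdd : ∀ A, MeasurableSet A → Bornology.IsBounded A →
      indicatorContent Ψ α A = c • momentSet A)
    (hQ : MeasurableSet Q) (hfin : mun Q ≠ ⊤) : indicatorContent Ψ α Q = c • momentSet Q := by
  have hball : ∀ k : ℕ, MeasurableSet (Q ∩ Metric.closedBall 0 k) :=
    fun k => hQ.inter measurableSet_closedBall
  have hbounded : ∀ k : ℕ, Bornology.IsBounded (Q ∩ Metric.closedBall 0 k) :=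
    fun k => Metric.isBounded_closedBall.subset inter_subset_right
  have hΨ : Tendsto (fun k : ℕ => indicatorContent Ψ α (Q ∩ Metric.closedBall 0 k)) atTop
      (𝓝 (indicatorContent Ψ α Q)) := by
    refine hcont.tendsto_indicatorContent hφ hball (fun k => mun_ne_top_of_isBounded (hbounded k))
      hQ hfin ?_
    simpa only [symmDiff_of_le (inter_subset_left : Q ∩ _ ≤ Q), sdiff_self_inter]
      using tendsto_mun_sdiff_closedBall hQ hfin
  simp only [hbdd _ (hball _) (hbounded _)] at hΨ
  exact tendsto_nhds_unique hΨ ((tendsto_momentSet_inter_closedBall hQ hfin).const_smul c)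

lemma exists_indicatorContent_eq_smul_momentSet (hn : 2 ≤ n) (hφ : IsYoung φ)
    (hval : IsOrliczValuation φ Ψ) (hcov : IsOrliczSLCovariant φ Ψ)
    (hcont : OrliczContinuous φ Ψ) (α : ℝ) :
    ∃ c : ℝ, ∀ Q, MeasurableSet Q → mun Q ≠ ⊤ → indicatorContent Ψ α Q = c • momentSet Q := by
  obtain ⟨c, hc⟩ := (isSLEquivariantContent_indicatorContent hn hφ hval hcov hcont α
    ).exists_eq_smul_setIntegral_id (by rwa [finrank_euclideanSpace_fin])
  exact ⟨c, fun Q hQ hfin => hcont.indicatorContent_eq_smul_momentSet hφ hc hQ hfin⟩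

lemma exists_momentSet_ne_zero (hn : 0 < n) :
    ∃ H : Set (En n), MeasurableSet H ∧ mun H ≠ ⊤ ∧ momentSet H ≠ 0 := by
  have : Nontrivial (En n) := Module.nontrivial_of_finrank_pos (R := ℝ) (by simpa using hn)
  obtain ⟨H, hH, hHb, hne⟩ := exists_setIntegral_id_ne_zero (volume : Measure (En n))
  exact ⟨H, hH, mun_ne_top_of_isBounded hHb, hne⟩

lemma IsPolytope.isCompact (hQ : IsPolytope Q) : IsCompact Q := by
  obtain ⟨S, -, rfl⟩ := hQ
  exact S.finite_toSet.isCompact_convexHull ℝ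

end Representation

theorem statement8_general (n : ℕ) (hn : 2 ≤ n) (φ : ℝ → ℝ) (hφ : IsYoung φ)
    (Ψ : (En n → ℝ) → En n) (hval : IsOrliczValuation φ Ψ) (hcov : IsOrliczSLCovariant φ Ψ)
    (hcont : OrliczContinuous φ Ψ) :
    ∃ ξ : ℝ → ℝ, Continuous ξ ∧ ξ 0 = 0 ∧
      ∀ (α : ℝ) (Q : Set (En n)), MeasurableSet Q → mun Q ≠ ⊤ →
        Ψ (Q.indicator fun _ => α) = ξ α • momentSet Q := by
  choose ξ hξ using exists_indicatorContent_eq_smul_momentSet hn hφ hval hcov hcont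
  obtain ⟨H, hH, hHfin, hne⟩ := exists_momentSet_ne_zero (n := n) (zero_lt_two.trans_le hn)
  refine ⟨ξ, ?_, ?_, hξ⟩
  · refine (isClosedEmbedding_smul_left hne).isInducing.continuous_iff.2 ?_
    simpa only [Function.comp_def, ← hξ _ H hH hHfin]
      using hcont.continuous_indicatorContent hφ hH hHfin
  · have h0 : ξ 0 • momentSet H = 0 := by
      rw [← hξ 0 H hH hHfin, indicatorContent_zero, hcov.map_zero hφ hn]
    exact (smul_eq_zero.1 h0).resolve_right hne

/-- For `n ≥ 2` and a Young function `φ`, if `Ψ : L^φ(ℝⁿ, |x|dx) → ℝⁿ`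
is a continuous, `SL(n)` covariant valuation, then there is a continuous `ξ : ℝ → ℝ` with
`ξ(0) = 0` such that `Ψ(α χ_Q) = ξ(α) m(Q)` for every `α ∈ ℝ` and every polytope `Q`. -/
theorem statement8 (n : ℕ) (hn : 2 ≤ n) (φ : ℝ → ℝ) (hφ : IsYoung φ)
    (Ψ : (En n → ℝ) → En n) (hae : RespectsAE φ Ψ)
    (hval : IsOrliczValuation φ Ψ) (hcov : IsOrliczSLCovariant φ Ψ)
    (hcont : OrliczContinuous φ Ψ) :
    ∃ ξ : ℝ → ℝ, Continuous ξ ∧ ξ 0 = 0 ∧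
      ∀ (α : ℝ) (Q : Set (En n)), IsPolytope Q →
        Ψ (Q.indicator fun _ => α) = ξ α • momentSet Q := by
  obtain ⟨ξ, hξ, hξ0, h⟩ := statement8_general n hn φ hφ Ψ hval hcov hcont
  exact ⟨ξ, hξ, hξ0, fun α Q hQ =>
    h α Q hQ.isCompact.measurableSet (mun_ne_top_of_isBounded hQ.isCompact.isBounded)⟩

end
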